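/- Factorization and neutrality in the probabilistic Call-by-Value λ-calculus: (1) for all multi-distributions m, n, if m ⇒* n then there exists a multi-distribution d with m ⇛E* d and d ⇛¬E* n; (2) if m ⇛¬E n then obsN(m) = obsN(n). -/

import Mathlib

/-- Terms of the probabilistic Call-by-Value λ-calculus `Λ⊕`, in de Bruijn
representation: `M ::= x | λx.M | M M | M ⊕ M`. -/
inductive PTm : Type
  | var : ℕ → PTm
  | lam : PTm → PTm
  | app : PTm → PTm → PTm
  | oplus : PTm → PTm → PTm
deriving DecidableEq

namespace PTm

/-- Lift (shift by one) the free variables of index `≥ d`. -/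
def lift (d : ℕ) : PTm → PTm
  | var n => if n < d then var n else var (n + 1)
  | lam M => lam (lift (d + 1) M)
  | app M N => app (lift d M) (lift d N)
  | oplus M N => oplus (lift d M) (lift d N)

/-- Capture-avoiding substitution `M[N/k]`. -/
def subst : PTm → ℕ → PTm → PTm
  | var n, k, N => if n = k then N else if k < n then var (n - 1) else var n
  | lam M, k, N => lam (subst M (k + 1) (lift 0 N))
  | app M₁ M₂, k, N => app (subst M₁ k N) (subst M₂ k N)
  | oplus M₁ M₂, k, N => oplus (subst M₁ k N) (subst M₂ k N)

end PTm

/-- Values: variables and abstractions. -/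
inductive IsValue : PTm → Prop
  | var (n : ℕ) : IsValue (PTm.var n)
  | lam (M : PTm) : IsValue (PTm.lam M)

/-- Full βv-reduction on terms: closure of `(λx.M)V ↦βv M[V/x]` (`V` a value) under
arbitrary contexts `C ::= ⟨⟩ | λx.C | C M | M C | C ⊕ M | M ⊕ C`. -/
inductive FullBv : PTm → PTm → Prop
  | beta {M V} : IsValue V → FullBv (PTm.app (PTm.lam M) V) (M.subst 0 V)
  | lam {M M'} : FullBv M M' → FullBv (PTm.lam M) (PTm.lam M')
  | appL {M M' N} : FullBv M M' → FullBv (PTm.app M N) (PTm.app M' N)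
  | appR {M N N'} : FullBv N N' → FullBv (PTm.app M N) (PTm.app M N')
  | oplusL {M M' N} : FullBv M M' → FullBv (PTm.oplus M N) (PTm.oplus M' N)
  | oplusR {M N N'} : FullBv N N' → FullBv (PTm.oplus M N) (PTm.oplus M N')

/-- Weak βv-reduction: closure of `↦βv` under weak contexts `W ::= ⟨⟩ | W M | M W`. -/
inductive WeakBv : PTm → PTm → Prop
  | beta {M V} : IsValue V → WeakBv (PTm.app (PTm.lam M) V) (M.subst 0 V)
  | appL {M M' N} : WeakBv M M' → WeakBv (PTm.app M N) (PTm.app M' N)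
  | appR {M N N'} : WeakBv N N' → WeakBv (PTm.app M N) (PTm.app M N')

/-- `OplusRed M M₁ M₂` : `M = W⟨P ⊕ Q⟩` for a weak context `W`, with branches
`M₁ = W⟨P⟩` and `M₂ = W⟨Q⟩`. -/
inductive OplusRed : PTm → PTm → PTm → Prop
  | root (M N : PTm) : OplusRed (PTm.oplus M N) M N
  | appL {P P₁ P₂ Q} : OplusRed P P₁ P₂ →
      OplusRed (PTm.app P Q) (PTm.app P₁ Q) (PTm.app P₂ Q)
  | appR {P Q Q₁ Q₂} : OplusRed Q Q₁ Q₂ →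
      OplusRed (PTm.app P Q) (PTm.app P Q₁) (PTm.app P Q₂)

/-- Multi-distributions: finite multisets of pairs `(p, M)`. -/
abbrev MDist := Multiset (NNReal × PTm)

/-- The multi-distribution `[1 M]`. -/
def single (M : PTm) : MDist := {((1 : NNReal), M)}

/-- A multi-distribution proper: all probabilities are in `(0,1]` and their sum is `≤ 1`. -/
def IsMDist (m : MDist) : Prop :=
  (∀ q ∈ m, 0 < q.1 ∧ q.1 ≤ 1) ∧ (m.map Prod.fst).sum ≤ 1

/-- One-step reduction `→ := →βv ∪ →⊕` from terms to multi-distributions: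
`C⟨(λx.M)V⟩ →βv [C⟨M[V/x]⟩]` and `W⟨M ⊕ N⟩ →⊕ [½ W⟨M⟩, ½ W⟨N⟩]`. -/
inductive Step : PTm → MDist → Prop
  | bv {M M'} : FullBv M M' → Step M (single M')
  | oplus {M M₁ M₂} : OplusRed M M₁ M₂ →
      Step M {((1 : NNReal) / 2, M₁), ((1 : NNReal) / 2, M₂)}

/-- Surface reduction `→s`: weak βv-steps together with all `→⊕`-steps. -/
inductive SStep : PTm → MDist → Prop
  | bv {M M'} : WeakBv M M' → SStep M (single M')
  | oplus {M M₁ M₂} : OplusRed M M₁ M₂ →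
      SStep M {((1 : NNReal) / 2, M₁), ((1 : NNReal) / 2, M₂)}

/-- A term is normal if it has no `→`-step. -/
def TmNormal (M : PTm) : Prop := ∀ m, ¬ Step M m

/-- A term is surface-normal if it has no `→s`-step. -/
def SurfNormal (M : PTm) : Prop := ∀ m, ¬ SStep M m

/-- The unbiased βv-strategy `⊳βv` on `Λ⊕`: weak βv-steps as long as there are any;
once the term has no weak βv-redex, iterate in the subterms. -/
inductive UnbBv : PTm → PTm → Prop
  | weak {M M'} : WeakBv M M' → UnbBv M M'
  | lam {P P'} : (∀ s, ¬ WeakBv (PTm.lam P) s) → UnbBv P P' →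
      UnbBv (PTm.lam P) (PTm.lam P')
  | appL {P P' Q} : (∀ s, ¬ WeakBv (PTm.app P Q) s) → UnbBv P P' →
      UnbBv (PTm.app P Q) (PTm.app P' Q)
  | appR {P Q Q'} : (∀ s, ¬ WeakBv (PTm.app P Q) s) → UnbBv Q Q' →
      UnbBv (PTm.app P Q) (PTm.app P Q')
  | oplusL {P P' Q} : (∀ s, ¬ WeakBv (PTm.oplus P Q) s) → UnbBv P P' →
      UnbBv (PTm.oplus P Q) (PTm.oplus P' Q)
  | oplusR {P Q Q'} : (∀ s, ¬ WeakBv (PTm.oplus P Q) s) → UnbBv Q Q' →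
      UnbBv (PTm.oplus P Q) (PTm.oplus P Q')

/-- Unbiased evaluation `⊳E` from terms to multi-distributions: a surface step if the
term is not surface-normal; otherwise an unbiased βv-step. -/
inductive EStep : PTm → MDist → Prop
  | surf {M m} : ¬ SurfNormal M → SStep M m → EStep M m
  | unb {M M'} : SurfNormal M → UnbBv M M' → EStep M (single M')

/-- Internal steps `⋫E`: `→`-steps that are not `⊳E`-steps. -/
def IStep (M : PTm) (m : MDist) : Prop := Step M m ∧ ¬ EStep M m

/-- Scalar multiplication `p • m` of a multi-distribution. -/
def scale (p : NNReal) (m : MDist) : MDist := m.map fun q => (p * q.1, q.2)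

/-- Lifting of a relation `r` from terms to multi-distributions, to a relation on
multi-distributions: `[M] ⇒r [M]`; `[M] ⇒r m` whenever `M r m`; and
`[pᵢ Mᵢ]ᵢ ⇒r Σᵢ pᵢ·mᵢ` whenever `[Mᵢ] ⇒r mᵢ` for each `i`. -/
inductive Lift (r : PTm → MDist → Prop) : MDist → MDist → Prop
  | zero : Lift r 0 0
  | keep {p M m n} : Lift r m n → Lift r ((p, M) ::ₘ m) ((p, M) ::ₘ n)
  | step {p M d m n} : r M d → Lift r m n → Lift r ((p, M) ::ₘ m) (scale p d + n)

/-- Full lifting of a relation `r` from terms to multi-distributions: as `Lift`, but a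
component may stay put only if it is a normal form. -/
inductive FullLift (r : PTm → MDist → Prop) : MDist → MDist → Prop
  | zero : FullLift r 0 0
  | keep {p M m n} : TmNormal M → FullLift r m n →
      FullLift r ((p, M) ::ₘ m) ((p, M) ::ₘ n)
  | step {p M d m n} : r M d → FullLift r m n →
      FullLift r ((p, M) ::ₘ m) (scale p d + n)

open Classical in
/-- The observation `obsN`: the subdistribution over normal forms carried by a
multi-distribution, `obsN(m)(N) = Σ { pᵢ : Mᵢ = N }` for `N` normal (and `0` on
non-normal terms). Subdistributions are ordered pointwise. -/
noncomputable def obsN (m : MDist) : PTm → NNReal := fun N =>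
  if TmNormal N then ((m.filter fun q => q.2 = N).map Prod.fst).sum else 0

/-!
Every reduction can be rearranged into a standard one in the sense of Plotkin: evaluation steps
first, then, below the outermost abstractions and choices of each component, standard reductions
again. In these inner reductions a contraction away from the evaluation position may still relate
the same two terms as an evaluation step: with `D` closed, `(λx.(λy.D)x)V` reduces to `(λy.D)V` both
at its root and below its abstraction. Such a coincidence is not an internal step, since `⋫E` is a
difference of relations on terms. A single internal standard reduction is therefore treated by
counting contractions. Either it yields a reduction that meets no coincidence, or a coincidence lets
evaluation steps be performed first, after which a strictly shorter standard reduction remains.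
Induction on the number of contractions gives factorization. At a root redex `(λA)V` a coincidence
needs a step `A → A'` with `A[V/x] = (λA')V`, and such steps are controlled by equations that no
finite term satisfies.

For neutrality, an internal step cannot end in a normal term: a contraction outside weak contexts
does not affect the existence of surface steps, and where there are none, the unbiased strategy
continues in the very subterm that is being reduced.
-/

namespace PTm

theorem lift_lift (M : PTm) {i j : ℕ} (h : i ≤ j) :
    lift i (lift j M) = lift (j + 1) (lift i M) := by
  induction M generalizing i j with
  | var n => grind [lift]
  | lam M ih => simp only [lift, ih (Nat.succ_le_succ h)]
  | app M N ihM ihN => simp only [lift, ihM h, ihN h]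
  | oplus M N ihM ihN => simp only [lift, ihM h, ihN h]

theorem subst_lift (M : PTm) (k : ℕ) (N : PTm) : (lift k M).subst k N = M := by
  induction M generalizing k N with
  | var n => grind [lift, subst]
  | lam M ih => simp only [lift, subst, ih]
  | app M₁ M₂ ih₁ ih₂ => simp only [lift, subst, ih₁, ih₂]
  | oplus M₁ M₂ ih₁ ih₂ => simp only [lift, subst, ih₁, ih₂]

theorem lift_subst_of_le (M N : PTm) {i k : ℕ} (h : i ≤ k) :
    lift i (M.subst k N) = (lift i M).subst (k + 1) (lift i N) := by
  induction M generalizing i k N with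
  | var n => grind [lift, subst]
  | lam M ih => simp only [lift, subst, ih _ (Nat.succ_le_succ h), lift_lift N i.zero_le]
  | app M₁ M₂ ih₁ ih₂ => simp only [lift, subst, ih₁ _ h, ih₂ _ h]
  | oplus M₁ M₂ ih₁ ih₂ => simp only [lift, subst, ih₁ _ h, ih₂ _ h]

theorem lift_subst_of_ge (M N : PTm) {i k : ℕ} (h : k ≤ i) :
    lift i (M.subst k N) = (lift (i + 1) M).subst k (lift i N) := by
  induction M generalizing i k N with
  | var n => grind [lift, subst]
  | lam M ih => simp only [lift, subst, ih _ (Nat.succ_le_succ h), lift_lift N i.zero_le]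
  | app M₁ M₂ ih₁ ih₂ => simp only [lift, subst, ih₁ _ h, ih₂ _ h]
  | oplus M₁ M₂ ih₁ ih₂ => simp only [lift, subst, ih₁ _ h, ih₂ _ h]

theorem subst_subst (M N L : PTm) {k j : ℕ} (h : k ≤ j) :
    (M.subst k N).subst j L = (M.subst (j + 1) (lift k L)).subst k (N.subst j L) := by
  induction M generalizing k j N L with
  | var n => grind [subst, subst_lift]
  | lam M ih =>
    simp only [subst, ih _ _ (Nat.succ_le_succ h), lift_lift L k.zero_le,
      lift_subst_of_le N L j.zero_le]
  | app M₁ M₂ ih₁ ih₂ => simp only [subst, ih₁ _ _ h, ih₂ _ _ h]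
  | oplus M₁ M₂ ih₁ ih₂ => simp only [subst, ih₁ _ _ h, ih₂ _ _ h]

end PTm

open PTm Relation

theorem IsValue.lift {V : PTm} (h : IsValue V) (k : ℕ) : IsValue (V.lift k) := by
  cases h with
  | var n => rw [PTm.lift]; split_ifs <;> exact .var _
  | lam M => exact .lam _

theorem IsValue.subst {V U : PTm} (h : IsValue V) (k : ℕ) (hU : IsValue U) :
    IsValue (V.subst k U) := by
  cases h with
  | var n => rw [PTm.subst]; split_ifs <;> first | exact hU | exact .var _
  | lam M => exact .lam _

theorem WeakBv.lift {M M' : PTm} (h : WeakBv M M') (k : ℕ) :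
    WeakBv (M.lift k) (M'.lift k) := by
  induction h with
  | beta hV => rw [lift_subst_of_ge _ _ k.zero_le]; exact .beta (hV.lift k)
  | appL _ ih => exact .appL ih
  | appR _ ih => exact .appR ih

theorem WeakBv.subst {M M' U : PTm} (h : WeakBv M M') (k : ℕ) (hU : IsValue U) :
    WeakBv (M.subst k U) (M'.subst k U) := by
  induction h with
  | beta hV => rw [subst_subst _ _ _ k.zero_le]; exact .beta (hV.subst k hU)
  | appL _ ih => exact .appL ih
  | appR _ ih => exact .appR ih

theorem WeakBv.fullBv {M M' : PTm} (h : WeakBv M M') : FullBv M M' := by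
  induction h with
  | beta hV => exact .beta hV
  | appL _ ih => exact .appL ih
  | appR _ ih => exact .appR ih

theorem not_weakBv_of_isValue {V N : PTm} (hV : IsValue V) : ¬ WeakBv V N := by
  rintro (_ | _ | _) <;> cases hV

theorem not_weakBv_oplus {A B N : PTm} : ¬ WeakBv (oplus A B) N := nofun

/-! ### Contractions below abstractions and choices -/

/-- βv-steps whose redex occurrence lies below an abstraction or a choice, i.e. is not under a
weak context. As a relation on terms this may overlap with `WeakBv`. -/
inductive DeepBv : PTm → PTm → Prop
  | lam {M M'} : FullBv M M' → DeepBv (PTm.lam M) (PTm.lam M')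
  | appL {M M' N} : DeepBv M M' → DeepBv (PTm.app M N) (PTm.app M' N)
  | appR {M N N'} : DeepBv N N' → DeepBv (PTm.app M N) (PTm.app M N')
  | oplusL {M M' N} : FullBv M M' → DeepBv (PTm.oplus M N) (PTm.oplus M' N)
  | oplusR {M N N'} : FullBv N N' → DeepBv (PTm.oplus M N) (PTm.oplus M N')

theorem DeepBv.fullBv {M M' : PTm} (h : DeepBv M M') : FullBv M M' := by
  induction h with
  | lam h => exact .lam h
  | appL _ ih => exact .appL ih
  | appR _ ih => exact .appR ih
  | oplusL h => exact .oplusL h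
  | oplusR h => exact .oplusR h

theorem FullBv.weakBv_or_deepBv {M M' : PTm} (h : FullBv M M') :
    WeakBv M M' ∨ DeepBv M M' := by
  induction h with
  | beta hV => exact .inl (.beta hV)
  | lam h _ => exact .inr (.lam h)
  | appL _ ih => exact ih.imp .appL .appL
  | appR _ ih => exact ih.imp .appR .appR
  | oplusL h _ => exact .inr (.oplusL h)
  | oplusR h _ => exact .inr (.oplusR h)

theorem FullBv.deepBv {M M' : PTm} (h : FullBv M M') (hw : ¬ WeakBv M M') : DeepBv M M' :=
  h.weakBv_or_deepBv.resolve_left hw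

/-- Root βv-redexes `(λx.M)V`. -/
inductive IsRedex : PTm → Prop
  | intro {M V : PTm} : IsValue V → IsRedex (app (lam M) V)

/-- Terms with a weak βv-step. -/
def HasWeakRedex (M : PTm) : Prop := ∃ N, WeakBv M N

/-- Terms with a `→⊕`-step. -/
def HasChoice (M : PTm) : Prop := ∃ M₁ M₂, OplusRed M M₁ M₂

theorem hasWeakRedex_app {P Q : PTm} :
    HasWeakRedex (app P Q) ↔ IsRedex (app P Q) ∨ HasWeakRedex P ∨ HasWeakRedex Q := by
  constructor
  · rintro ⟨_, hV | h | h⟩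
    · exact .inl ⟨‹_›⟩
    · exact .inr (.inl ⟨_, h⟩)
    · exact .inr (.inr ⟨_, h⟩)
  · rintro (⟨⟨hV⟩⟩ | ⟨_, h⟩ | ⟨_, h⟩)
    · exact ⟨_, .beta hV⟩
    · exact ⟨_, .appL h⟩
    · exact ⟨_, .appR h⟩

theorem not_hasWeakRedex_of_isValue {V : PTm} (hV : IsValue V) : ¬ HasWeakRedex V :=
  fun ⟨_, h⟩ => not_weakBv_of_isValue hV h

theorem not_hasWeakRedex_oplus {A B : PTm} : ¬ HasWeakRedex (oplus A B) :=
  fun ⟨_, h⟩ => not_weakBv_oplus h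

theorem hasChoice_app {P Q : PTm} : HasChoice (app P Q) ↔ HasChoice P ∨ HasChoice Q := by
  constructor
  · rintro ⟨_, _, _ | h | h⟩
    · exact .inl ⟨_, _, h⟩
    · exact .inr ⟨_, _, h⟩
  · rintro (⟨_, _, h⟩ | ⟨_, _, h⟩)
    · exact ⟨_, _, .appL h⟩
    · exact ⟨_, _, .appR h⟩

theorem hasChoice_oplus {A B : PTm} : HasChoice (oplus A B) := ⟨_, _, .root _ _⟩

theorem surfNormal_iff {M : PTm} : SurfNormal M ↔ ¬ HasWeakRedex M ∧ ¬ HasChoice M := by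
  constructor
  · exact fun h => ⟨fun ⟨_, hw⟩ => h _ (.bv hw), fun ⟨_, _, ho⟩ => h _ (.oplus ho)⟩
  · rintro ⟨hw, ho⟩ _ (h | h)
    · exact hw ⟨_, h⟩
    · exact ho ⟨_, _, h⟩

namespace DeepBv

variable {M M' : PTm}

theorem isValue_iff (h : DeepBv M M') : IsValue M ↔ IsValue M' := by
  cases h
  case lam => exact iff_of_true (.lam _) (.lam _)
  all_goals exact iff_of_false nofun nofun

theorem isRedex_iff (h : DeepBv M M') : IsRedex M ↔ IsRedex M' := by
  cases h
  case appL h => constructor <;> rintro ⟨hV⟩ <;> cases h <;> exact ⟨hV⟩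
  case appR h =>
    constructor <;> rintro ⟨hV⟩
    · exact ⟨h.isValue_iff.1 hV⟩
    · exact ⟨h.isValue_iff.2 hV⟩
  all_goals exact iff_of_false nofun nofun

theorem hasWeakRedex_iff (h : DeepBv M M') : HasWeakRedex M ↔ HasWeakRedex M' := by
  induction h with
  | lam _ =>
    exact iff_of_false (not_hasWeakRedex_of_isValue (.lam _)) (not_hasWeakRedex_of_isValue (.lam _))
  | appL h ih => rw [hasWeakRedex_app, hasWeakRedex_app, ih, h.appL.isRedex_iff]
  | appR h ih => rw [hasWeakRedex_app, hasWeakRedex_app, ih, h.appR.isRedex_iff]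
  | oplusL _ => exact iff_of_false not_hasWeakRedex_oplus not_hasWeakRedex_oplus
  | oplusR _ => exact iff_of_false not_hasWeakRedex_oplus not_hasWeakRedex_oplus

theorem hasChoice_iff (h : DeepBv M M') : HasChoice M ↔ HasChoice M' := by
  induction h with
  | lam _ => exact iff_of_false nofun nofun
  | appL _ ih => rw [hasChoice_app, hasChoice_app, ih]
  | appR _ ih => rw [hasChoice_app, hasChoice_app, ih]
  | oplusL _ => exact iff_of_true hasChoice_oplus hasChoice_oplus
  | oplusR _ => exact iff_of_true hasChoice_oplus hasChoice_oplus

theorem surfNormal_iff (h : DeepBv M M') : SurfNormal M ↔ SurfNormal M' := by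
  rw [_root_.surfNormal_iff, _root_.surfNormal_iff, h.hasWeakRedex_iff, h.hasChoice_iff]

end DeepBv

/-! ### Standard reductions -/

/-- `WeakBvSteps n M N`: `M` reduces to `N` in exactly `n` weak βv-steps. -/
inductive WeakBvSteps : ℕ → PTm → PTm → Prop
  | zero (M) : WeakBvSteps 0 M M
  | succ {n M P N} : WeakBv M P → WeakBvSteps n P N → WeakBvSteps (n + 1) M N

namespace WeakBvSteps

variable {a b : ℕ} {M N P Q : PTm}

theorem trans (h : WeakBvSteps a M P) (h' : WeakBvSteps b P N) : WeakBvSteps (a + b) M N := by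
  induction h with
  | zero => rwa [Nat.zero_add]
  | succ h _ ih => rw [Nat.add_right_comm]; exact .succ h (ih h')

theorem lift (h : WeakBvSteps a M N) (k : ℕ) : WeakBvSteps a (M.lift k) (N.lift k) := by
  induction h with
  | zero => exact .zero _
  | succ h _ ih => exact .succ (h.lift k) ih

theorem subst (h : WeakBvSteps a M N) (k : ℕ) {U : PTm} (hU : IsValue U) :
    WeakBvSteps a (M.subst k U) (N.subst k U) := by
  induction h with
  | zero => exact .zero _
  | succ h _ ih => exact .succ (h.subst k hU) ih

theorem appL (h : WeakBvSteps a M N) : WeakBvSteps a (app M Q) (app N Q) := by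
  induction h with
  | zero => exact .zero _
  | succ h _ ih => exact .succ h.appL ih

theorem appR (h : WeakBvSteps a M N) : WeakBvSteps a (app Q M) (app Q N) := by
  induction h with
  | zero => exact .zero _
  | succ h _ ih => exact .succ h.appR ih

theorem reflTransGen (h : WeakBvSteps a M N) : ReflTransGen WeakBv M N := by
  induction h with
  | zero => exact .refl
  | succ h _ ih => exact .head h ih

end WeakBvSteps

/-- `InternalStandard n M N`: a standard reduction of length `n` from `M` to `N` that contracts no
redex in weak position, i.e. one that performs a standard reduction (weak steps first, then
internal ones) below each outermost abstraction and choice. -/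
inductive InternalStandard : ℕ → PTm → PTm → Prop
  | var (n) : InternalStandard 0 (PTm.var n) (PTm.var n)
  | lam {a b A A₁ B} : WeakBvSteps a A A₁ → InternalStandard b A₁ B →
      InternalStandard (a + b) (PTm.lam A) (PTm.lam B)
  | app {a b P P' Q Q'} : InternalStandard a P P' → InternalStandard b Q Q' →
      InternalStandard (a + b) (PTm.app P Q) (PTm.app P' Q')
  | oplus {a b c d P P₁ P' Q Q₁ Q'} : WeakBvSteps a P P₁ → InternalStandard b P₁ P' →
      WeakBvSteps c Q Q₁ → InternalStandard d Q₁ Q' →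
      InternalStandard (a + b + (c + d)) (PTm.oplus P Q) (PTm.oplus P' Q')

/-- `Standard n M N`: a βv-reduction of length `n` from `M` to `N` that is standard in Plotkin's
sense, namely weak steps followed by an internal standard reduction. -/
inductive Standard : ℕ → PTm → PTm → Prop
  | intro {a b M P N} : WeakBvSteps a M P → InternalStandard b P N → Standard (a + b) M N

theorem WeakBvSteps.standard {a b : ℕ} {M P N : PTm} (h : WeakBvSteps a M P)
    (hP : Standard b P N) : Standard (a + b) M N := by
  obtain ⟨hW, hI⟩ := hP
  rw [← Nat.add_assoc]
  exact ⟨h.trans hW, hI⟩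

theorem InternalStandard.standard {n : ℕ} {M N : PTm} (h : InternalStandard n M N) :
    Standard n M N := by
  simpa only [Nat.zero_add] using Standard.intro (.zero M) h

namespace Standard

variable {n m : ℕ} {A B C D : PTm}

theorem lam (h : Standard n A B) : InternalStandard n (lam A) (lam B) := by
  obtain ⟨hW, hI⟩ := h
  exact .lam hW hI

theorem oplus (h : Standard n A B) (h' : Standard m C D) :
    InternalStandard (n + m) (oplus A C) (oplus B D) := by
  obtain ⟨hW, hI⟩ := h
  obtain ⟨hW', hI'⟩ := h'
  exact .oplus hW hI hW' hI'

theorem app (h : Standard n A B) (h' : Standard m C D) :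
    Standard (n + m) (app A C) (app B D) := by
  obtain ⟨hW, hI⟩ := h
  obtain ⟨hW', hI'⟩ := h'
  rw [Nat.add_add_add_comm]
  exact ⟨hW.appL.trans hW'.appR, hI.app hI'⟩

end Standard

namespace InternalStandard

variable {n m : ℕ} {M N V U : PTm}

theorem refl (M : PTm) : InternalStandard 0 M M := by
  induction M with
  | var n => exact .var n
  | lam M ih => exact .lam (.zero _) ih
  | app M N ihM ihN => exact .app ihM ihN
  | oplus M N ihM ihN => exact .oplus (.zero _) ihM (.zero _) ihN

theorem isValue_iff (h : InternalStandard n M N) : IsValue M ↔ IsValue N := by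
  cases h
  case var => exact Iff.rfl
  case lam => exact iff_of_true (.lam _) (.lam _)
  all_goals exact iff_of_false nofun nofun

theorem lift (h : InternalStandard n M N) (k : ℕ) : InternalStandard n (M.lift k) (N.lift k) := by
  induction h generalizing k with
  | var n => exact refl _
  | lam h _ ih => exact .lam (h.lift _) (ih _)
  | app _ _ ihP ihQ => exact .app (ihP _) (ihQ _)
  | oplus hP _ hQ _ ihP ihQ => exact .oplus (hP.lift _) (ihP _) (hQ.lift _) (ihQ _)

theorem exists_subst (h : InternalStandard n M N) (k : ℕ) (hV : IsValue V)
    (hVU : InternalStandard m V U) :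
    ∃ l, InternalStandard l (M.subst k V) (N.subst k U) := by
  induction h generalizing k V U with
  | var n =>
    simp only [PTm.subst]
    split_ifs
    · exact ⟨_, hVU⟩
    · exact ⟨_, refl _⟩
    · exact ⟨_, refl _⟩
  | lam h _ ih =>
    obtain ⟨_, hB⟩ := ih (k + 1) (hV.lift 0) (hVU.lift 0)
    exact ⟨_, .lam (h.subst _ (hV.lift 0)) hB⟩
  | app _ _ ihP ihQ =>
    obtain ⟨_, hP⟩ := ihP k hV hVU
    obtain ⟨_, hQ⟩ := ihQ k hV hVU
    exact ⟨_, .app hP hQ⟩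
  | oplus hWP _ hWQ _ ihP ihQ =>
    obtain ⟨_, hP⟩ := ihP k hV hVU
    obtain ⟨_, hQ⟩ := ihQ k hV hVU
    exact ⟨_, .oplus (hWP.subst _ hV) hP (hWQ.subst _ hV) hQ⟩

theorem exists_standard_of_fullBv {N' : PTm} (h : InternalStandard n M N) (hN : FullBv N N') :
    ∃ l, Standard l M N' := by
  induction hN generalizing n M with
  | beta hV =>
    obtain _ | _ | ⟨_ | ⟨hW, hA⟩, hQ⟩ := h
    have hQv := hQ.isValue_iff.2 hV
    obtain ⟨_, hAQ⟩ := hA.exists_subst 0 hQv hQ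
    exact ⟨_, (WeakBvSteps.succ (.beta hQv) (hW.subst 0 hQv)).standard hAQ.standard⟩
  | lam _ ih =>
    obtain _ | ⟨hW, hI⟩ := h
    obtain ⟨_, hS⟩ := ih hI
    exact ⟨_, (hW.standard hS).lam.standard⟩
  | appL _ ih =>
    obtain _ | _ | ⟨hP, hQ⟩ := h
    obtain ⟨_, hS⟩ := ih hP
    exact ⟨_, hS.app hQ.standard⟩
  | appR _ ih =>
    obtain _ | _ | ⟨hP, hQ⟩ := h
    obtain ⟨_, hS⟩ := ih hQ
    exact ⟨_, hP.standard.app hS⟩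
  | oplusL _ ih =>
    obtain _ | _ | _ | ⟨hWP, hP, hWQ, hQ⟩ := h
    obtain ⟨_, hS⟩ := ih hP
    exact ⟨_, ((hWP.standard hS).oplus ⟨hWQ, hQ⟩).standard⟩
  | oplusR _ ih =>
    obtain _ | _ | _ | ⟨hWP, hP, hWQ, hQ⟩ := h
    obtain ⟨_, hS⟩ := ih hQ
    exact ⟨_, (Standard.oplus ⟨hWP, hP⟩ (hWQ.standard hS)).standard⟩

end InternalStandard

/-! ### Proper and avoiding steps -/

/-- The part of `r` off the diagonal. A βv-loop has to be discarded, because a loop on one side of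
an application may coincide with a step on the other side. -/
def Proper (r : PTm → PTm → Prop) (M N : PTm) : Prop := r M N ∧ M ≠ N

/-- Proper βv-steps that do not coincide, as pairs of terms, with a step of the strategy `e`. -/
def Avoiding (e : PTm → PTm → Prop) (M N : PTm) : Prop := Proper FullBv M N ∧ ¬ e M N

theorem lam_injective : Function.Injective lam := fun _ _ => lam.inj

theorem app_left_injective (Q : PTm) : Function.Injective (app · Q) := fun _ _ h => (app.inj h).1

theorem app_right_injective (P : PTm) : Function.Injective (app P) := fun _ _ h => (app.inj h).2

theorem oplus_left_injective (Q : PTm) : Function.Injective (oplus · Q) :=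
  fun _ _ h => (oplus.inj h).1

theorem oplus_right_injective (P : PTm) : Function.Injective (oplus P) :=
  fun _ _ h => (oplus.inj h).2

theorem Proper.map {r s : PTm → PTm → Prop} {f : PTm → PTm} (hf : f.Injective)
    (hrs : ∀ {M N}, r M N → s (f M) (f N)) {M N : PTm} (h : Proper r M N) :
    Proper s (f M) (f N) :=
  ⟨hrs h.1, hf.ne h.2⟩

theorem reflTransGen_proper_map {r s : PTm → PTm → Prop} {f : PTm → PTm} (hf : f.Injective)
    (hrs : ∀ {M N}, r M N → s (f M) (f N)) {M N : PTm} (h : ReflTransGen (Proper r) M N) :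
    ReflTransGen (Proper s) (f M) (f N) :=
  ReflTransGen.lift f (fun _ _ => Proper.map hf hrs) _ _ h

theorem reflTransGen_proper_mono {r s : PTm → PTm → Prop} (hrs : ∀ {M N}, r M N → s M N)
    {M N : PTm} (h : ReflTransGen (Proper r) M N) : ReflTransGen (Proper s) M N :=
  reflTransGen_proper_map Function.injective_id hrs h

theorem reflTransGen_lift_of_invariant {r s : PTm → PTm → Prop} {p : PTm → Prop} (f : PTm → PTm)
    (hstep : ∀ {M N}, p M → r M N → p N ∧ s (f M) (f N)) {M N : PTm}
    (h : ReflTransGen r M N) (hM : p M) : p N ∧ ReflTransGen s (f M) (f N) := by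
  induction h with
  | refl => exact ⟨hM, .refl⟩
  | tail _ hr ih => exact ⟨(hstep ih.1 hr).1, ih.2.tail (hstep ih.1 hr).2⟩

theorem WeakBvSteps.reflTransGen_proper {n : ℕ} {M N : PTm} (h : WeakBvSteps n M N) :
    ReflTransGen (Proper WeakBv) M N := by
  induction h with
  | zero => exact .refl
  | @succ _ M P _ hMP _ ih =>
    obtain rfl | hne := eq_or_ne M P
    · exact ih
    · exact .head ⟨hMP, hne⟩ ih

theorem reflTransGen_proper_fullBv_of_steps {n : ℕ} {M P N : PTm} (hMP : WeakBvSteps n M P)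
    (hPN : ReflTransGen (Proper DeepBv) P N) : ReflTransGen (Proper FullBv) M N :=
  (reflTransGen_proper_mono WeakBv.fullBv hMP.reflTransGen_proper).trans
    (reflTransGen_proper_mono DeepBv.fullBv hPN)

theorem InternalStandard.reflTransGen_deepBv {n : ℕ} {M N : PTm} (h : InternalStandard n M N) :
    ReflTransGen (Proper DeepBv) M N := by
  induction h with
  | var n => exact .refl
  | lam hW _ ih =>
    exact reflTransGen_proper_map lam_injective .lam (reflTransGen_proper_fullBv_of_steps hW ih)
  | @app _ _ P P' Q Q' _ _ ihP ihQ =>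
    exact (reflTransGen_proper_map (app_left_injective Q) .appL ihP).trans
      (reflTransGen_proper_map (app_right_injective P') .appR ihQ)
  | @oplus _ _ _ _ P P₁ P' Q Q₁ Q' hWP _ hWQ _ ihP ihQ =>
    exact (reflTransGen_proper_map (oplus_left_injective Q) .oplusL
        (reflTransGen_proper_fullBv_of_steps hWP ihP)).trans
      (reflTransGen_proper_map (oplus_right_injective P') .oplusR
        (reflTransGen_proper_fullBv_of_steps hWQ ihQ))

theorem Standard.reflTransGen_fullBv {n : ℕ} {M N : PTm} (h : Standard n M N) :
    ReflTransGen (Proper FullBv) M N := by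
  obtain ⟨hW, hI⟩ := h
  exact reflTransGen_proper_fullBv_of_steps hW hI.reflTransGen_deepBv

theorem Avoiding.deepBv {e : PTm → PTm → Prop} (he : WeakBv ≤ e) {M N : PTm}
    (h : Avoiding e M N) : DeepBv M N :=
  h.1.1.deepBv fun hw => h.2 (he _ _ hw)

theorem Avoiding.map {e e' : PTm → PTm → Prop} {f : PTm → PTm} (hf : f.Injective)
    (hfull : ∀ {M N}, FullBv M N → FullBv (f M) (f N)) {M N : PTm} (h : Avoiding e M N)
    (he : e' (f M) (f N) → e M N) : Avoiding e' (f M) (f N) :=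
  ⟨h.1.map hf hfull, mt he h.2⟩

theorem avoiding_of_deepBv_map {e : PTm → PTm → Prop} {f : PTm → PTm} (hf : f.Injective)
    (hfull : ∀ {M N}, FullBv M N → FullBv (f M) (f N)) {M N : PTm} (h : Proper DeepBv M N)
    (he : ¬ e (f M) (f N)) : Avoiding e (f M) (f N) :=
  ⟨h.map hf fun hd => hfull hd.fullBv, he⟩

/-! ### Syntactic accidents -/

namespace PTm

theorem subst_eq_subst_of_lift_eq {k : ℕ} {W M : PTm} (h : lift k W = M) (X Y : PTm) :
    M.subst k X = M.subst k Y := by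
  rw [← h, subst_lift, subst_lift]

theorem lift_ne_app_lam_var {k : ℕ} {W U : PTm} :
    lift k W ≠ app (lam (var (k + 1))) U := fun h => by
  simpa [subst, lift] using subst_eq_subst_of_lift_eq h (var 0) (var 1)

theorem lift_ne_lam_app_var {k : ℕ} {W U : PTm} :
    lift k W ≠ lam (app (var (k + 1)) U) := fun h => by
  simpa [subst, lift] using subst_eq_subst_of_lift_eq h (var 0) (var 1)

theorem lift_ne_var {k : ℕ} {W : PTm} : lift k W ≠ var k := fun h => by
  simpa [subst] using subst_eq_subst_of_lift_eq h (var 0) (var 1)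

/-- The conjunction is what the structural induction needs: each half for `C` reduces to the other
half for the head of `C`. -/
theorem subst_lift_ne_app_lam_and_ne_lam_app (C W : PTm) (k : ℕ) :
    (∀ U, C.subst (k + 1) (W.lift k) ≠ app (lam C) U) ∧
      ∀ D, C.subst (k + 1) (W.lift k) ≠ lam (app C D) := by
  induction C generalizing k W with
  | var i =>
    simp only [subst]
    split_ifs with hi
    · subst hi
      exact ⟨fun _ => lift_ne_app_lam_var, fun _ => lift_ne_lam_app_var⟩
    all_goals exact ⟨nofun, nofun⟩
  | lam D ih =>
    refine ⟨nofun, fun E h => (ih (W.lift 0) (k + 1)).1 E ?_⟩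
    rw [← lift_lift W k.zero_le]
    exact lam.inj h
  | app C₁ C₂ ih₁ _ => exact ⟨fun U h => (ih₁ W k).2 C₂ (app.inj h).1, nofun⟩
  | oplus => exact ⟨nofun, nofun⟩

theorem subst_lift_ne_app_lam {C W U : PTm} {k : ℕ} :
    C.subst (k + 1) (W.lift k) ≠ app (lam C) U :=
  (subst_lift_ne_app_lam_and_ne_lam_app C W k).1 U

theorem subst_lift_ne_lam_app {C D W : PTm} {k : ℕ} :
    C.subst (k + 1) (W.lift k) ≠ lam (app C D) :=
  (subst_lift_ne_app_lam_and_ne_lam_app C W k).2 D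

theorem subst_ne_and_subst_lift_ne_of_fullBv {T T' : PTm} (h : FullBv T T') (k : ℕ) (V : PTm) :
    T.subst k V ≠ lam (app (var 0) T') ∧
      T.subst (k + 1) (V.lift 0) ≠ app (var 0) (lam T') := by
  induction h generalizing k V with
  | lam _ ih => exact ⟨fun e => (ih k V).2 (lam.inj e), nofun⟩
  | @appR P Q Q' _ ih =>
    refine ⟨nofun, fun e => ?_⟩
    obtain ⟨eP, eQ⟩ := app.inj e
    obtain rfl : P = var 0 := by
      cases P with
      | var i =>
        simp only [subst] at eP
        split_ifs at eP with hi
        · exact absurd eP lift_ne_var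
        · simp only [var.injEq] at eP; omega
        · exact eP
      | _ => cases eP
    exact (ih (k + 1) (V.lift 0)).1 eQ
  | @appL P _ _ hP _ =>
    refine ⟨nofun, fun e => ?_⟩
    cases P with
    | var => cases hP
    | _ => cases (app.inj e).1
  | beta => exact ⟨nofun, nofun⟩
  | oplusL | oplusR => exact ⟨nofun, nofun⟩

theorem subst_ne_lam_app_var_of_fullBv {T T' : PTm} (h : FullBv T T') (k : ℕ) (V : PTm) :
    T.subst k V ≠ lam (app (var 0) T') :=
  (subst_ne_and_subst_lift_ne_of_fullBv h k V).1

theorem subst_zero_ne_app_lam_of_fullBv {A V V' : PTm} (h : FullBv V V') (hV : IsValue V) :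
    A.subst 0 V ≠ app (lam A) V' := by
  intro e
  cases A with
  | var i =>
    simp only [subst] at e
    split_ifs at e
    subst e
    cases hV
  | lam _ => cases e
  | oplus _ _ => cases e
  | app B₁ B₂ =>
    obtain ⟨e₁, e₂⟩ := app.inj e
    cases B₁ with
    | var i =>
      simp only [subst] at e₁
      split_ifs at e₁ with hi
      subst hi e₁
      cases h with
      | lam h =>
        cases h with
        | appL h => cases h
        | appR h => exact subst_ne_lam_app_var_of_fullBv h _ _ e₂
    | lam C => exact subst_lift_ne_app_lam (lam.inj e₁)
    | app _ _ => cases e₁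
    | oplus _ _ => cases e₁

end PTm

/-- The accident in which substituting `V` for the variable `k` in `Q` produces `(λQ')U`. For
`k = 0` and `U = V`, contracting the redex `(λQ)V` then has the same effect as the step `Q → Q'`
below its abstraction. -/
def SubstAccident (k : ℕ) (V U Q Q' : PTm) : Prop := Q.subst k V = app (lam Q') U

theorem substAccident_app_iff {k : ℕ} {V U P Q Q' : PTm} :
    SubstAccident k V U (app P Q) Q' ↔ P.subst k V = lam Q' ∧ Q.subst k V = U :=
  (app.injEq _ _ _ _).to_iff

/-- The parameters of `SubstAccident` that arise from a root redex `(λA)V`: either those of the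
redex itself, or those met under further abstractions of `A`, where `V` has been lifted. -/
inductive RedexParams : ℕ → PTm → PTm → Prop
  | root {V} : IsValue V → RedexParams 0 V V
  | under {k W U} : IsValue (lift k W) → RedexParams (k + 1) (lift k W) U

/-- Either an avoiding reduction from `A` to `N` exists, or the weak reduction of `A[V/k]` reaches
`(λY)U` for some `Y` from which a standard reduction leads to `N`, in fewer than `n` steps
altogether. -/
def SubstAvoidsOrShortens (k : ℕ) (V U : PTm) (n : ℕ) (A N : PTm) : Prop :=
  ReflTransGen (Avoiding (SubstAccident k V U)) A N ∨
    ∃ a c Y, WeakBvSteps a (A.subst k V) (app (lam Y) U) ∧ Standard c Y N ∧ a + c < n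

/-- Applications whose operator is a value. -/
inductive ValueHeaded : PTm → Prop
  | intro {P Q} : IsValue P → ValueHeaded (app P Q)

theorem DeepBv.valueHeaded_iff {M M' : PTm} (h : DeepBv M M') :
    ValueHeaded M ↔ ValueHeaded M' := by
  cases h
  case appL h => exact ⟨fun ⟨hV⟩ => ⟨h.isValue_iff.1 hV⟩, fun ⟨hV⟩ => ⟨h.isValue_iff.2 hV⟩⟩
  case appR => exact ⟨fun ⟨hV⟩ => ⟨hV⟩, fun ⟨hV⟩ => ⟨hV⟩⟩
  all_goals exact iff_of_false nofun nofun

namespace RedexParams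

variable {k : ℕ} {V U : PTm}

theorem isValue (h : RedexParams k V U) : IsValue V := by
  cases h <;> assumption

theorem lift (h : RedexParams k V U) (B : PTm) : RedexParams (k + 1) (V.lift 0) B := by
  cases h with
  | root hV => exact .under (hV.lift 0)
  | @under j W _ hV =>
    have hV' := hV.lift 0
    rw [lift_lift W j.zero_le] at hV' ⊢
    exact .under hV'

theorem subst_lift_ne_app_lam (h : RedexParams k V U) {C B : PTm} :
    C.subst (k + 1) (V.lift 0) ≠ app (lam C) B := by
  cases h with
  | root => exact PTm.subst_lift_ne_app_lam
  | @under j W =>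
    rw [lift_lift W j.zero_le]
    exact PTm.subst_lift_ne_app_lam

theorem not_substAccident_app_var (h : RedexParams k V U) {i : ℕ} {x y : PTm}
    (hxy : FullBv x y) : ¬ SubstAccident k V U (app (var i) x) (app (var i) y) := by
  intro e
  obtain ⟨e₁, e₂⟩ := substAccident_app_iff.1 e
  cases h with
  | under => exact subst_lift_ne_lam_app e₁
  | root =>
    simp only [subst] at e₁
    split_ifs at e₁ with hi
    subst hi e₁
    exact subst_ne_lam_app_var_of_fullBv hxy _ _ e₂

end RedexParams

theorem SubstAccident.valueHeaded {k : ℕ} {V U Q Q' : PTm} (h : SubstAccident k V U Q Q')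
    (hV : IsValue V) : ValueHeaded Q := by
  unfold SubstAccident at h
  cases Q with
  | var i =>
    simp only [subst] at h
    split_ifs at h
    subst h
    cases hV
  | lam _ => cases h
  | oplus _ _ => cases h
  | app P _ =>
    refine ⟨?_⟩
    cases P with
    | var _ => exact .var _
    | lam _ => exact .lam _
    | _ => cases (app.inj h).1

namespace SubstAvoidsOrShortens

variable {k : ℕ} {V U : PTm}

theorem of_weakBvSteps {a b : ℕ} {A P N : PTm} (hV : IsValue V) (hAP : WeakBvSteps a A P)
    (hI : InternalStandard b P N) (h : SubstAvoidsOrShortens k V U b P N) :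
    SubstAvoidsOrShortens k V U (a + b) A N := by
  induction hAP with
  | zero => rwa [Nat.zero_add]
  | @succ n A B P hAB hBP ih =>
    obtain rfl | hne := eq_or_ne A B
    · obtain h | ⟨a, c, Y, hY, hYN, hlt⟩ := ih hI h
      · exact .inl h
      · exact .inr ⟨a, c, Y, hY, hYN, by omega⟩
    by_cases hacc : SubstAccident k V U A B
    · exact .inr ⟨0, n + b, B, hacc ▸ .zero _, ⟨hBP, hI⟩, by omega⟩
    · obtain h | ⟨a, c, Y, hY, hYN, hlt⟩ := ih hI h
      · exact .inl (.head ⟨⟨hAB.fullBv, hne⟩, hacc⟩ h)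
      · exact .inr ⟨a + 1, c, Y, .succ (hAB.subst k hV) hY, hYN, by omega⟩

theorem of_not_valueHeaded {n : ℕ} {P N : PTm} (hV : IsValue V) (hI : InternalStandard n P N)
    (hP : ¬ ValueHeaded P) : SubstAvoidsOrShortens k V U n P N := by
  refine .inl (reflTransGen_lift_of_invariant (p := (¬ ValueHeaded ·)) id ?_
    hI.reflTransGen_deepBv hP).2
  intro x y hx hxy
  exact ⟨mt hxy.1.valueHeaded_iff.2 hx, ⟨hxy.1.fullBv, hxy.2⟩, fun e => hx (e.valueHeaded hV)⟩

theorem app_var {n i : ℕ} {B B' : PTm} (hp : RedexParams k V U) (hB : InternalStandard n B B') :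
    SubstAvoidsOrShortens k V U n (app (var i) B) (app (var i) B') :=
  .inl (ReflTransGen.lift (app (var i)) (fun _ _ h => avoiding_of_deepBv_map
    (app_right_injective _) .appR h (hp.not_substAccident_app_var h.1.fullBv)) _ _
    hB.reflTransGen_deepBv)

theorem reflTransGen_avoiding_app_lam {n : ℕ} {C B B' : PTm} (hp : RedexParams k V U)
    (hB : InternalStandard n B B') :
    ReflTransGen (Avoiding (SubstAccident k V U)) (app (lam C) B) (app (lam C) B') :=
  ReflTransGen.lift (app (lam C)) (fun _ _ h => avoiding_of_deepBv_map
    (app_right_injective _) .appR h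
    fun e => hp.subst_lift_ne_app_lam (lam.inj (substAccident_app_iff.1 e).1)) _ _
    hB.reflTransGen_deepBv

theorem app_lam {n m : ℕ} {C C' B B' : PTm} (hp : RedexParams k V U) (hC : Standard n C C')
    (hB : InternalStandard m B B')
    (h : SubstAvoidsOrShortens (k + 1) (V.lift 0) B n C C') :
    SubstAvoidsOrShortens k V U (n + m) (app (lam C) B) (app (lam C') B') := by
  let f (x : PTm) : PTm := app (lam x) B
  have hinj : f.Injective := (app_left_injective B).comp lam_injective
  have hfull {x y} (hxy : FullBv x y) : FullBv (f x) (f y) := hxy.lam.appL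
  have harg := reflTransGen_avoiding_app_lam (C := C') hp hB
  by_cases hU : B.subst k V = U
  · obtain h | ⟨a, c, Y, hY, hYC, hlt⟩ := h
    · refine .inl (.trans (ReflTransGen.lift f (fun x y hxy => ?_) _ _ h) harg)
      exact hxy.map hinj hfull fun e => lam.inj (substAccident_app_iff.1 e).1
    · refine .inr ⟨0, a + (c + m), C.subst (k + 1) (V.lift 0), ?_, ?_, by omega⟩
      · rw [← hU]
        exact .zero _
      · exact hY.standard (hYC.lam.app hB).standard
  · refine .inl (.trans (ReflTransGen.lift f (fun x y hxy => ?_) _ _ hC.reflTransGen_fullBv) harg)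
    exact ⟨hxy.map hinj hfull, fun e => hU (substAccident_app_iff.1 e).2⟩

end SubstAvoidsOrShortens

theorem InternalStandard.substAvoidsOrShortens {n k : ℕ} {P N V U : PTm}
    (h : InternalStandard n P N) (hp : RedexParams k V U) :
    SubstAvoidsOrShortens k V U n P N := by
  induction hs : sizeOf N using Nat.strong_induction_on generalizing n k P N V U with
  | _ s ih =>
    by_cases hP : ValueHeaded P
    case neg => exact .of_not_valueHeaded hp.isValue h hP
    obtain @⟨_, B, hv⟩ := hP
    obtain _ | _ | ⟨hP, hB⟩ := h
    cases hv with
    | var i =>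
      cases hP
      rw [Nat.zero_add]
      exact .app_var hp hB
    | lam C =>
      obtain _ | ⟨hW, hC⟩ := hP
      have hCs := ih _ (by subst hs; simp only [app.sizeOf_spec, lam.sizeOf_spec]; omega) hC
        (hp.lift B) rfl
      exact .app_lam hp ⟨hW, hC⟩ hB (.of_weakBvSteps (hp.isValue.lift 0) hW hC hCs)

/-! ### Avoiding a strategy -/

/-- The dichotomy established for a strategy `e` and an internal standard reduction of length `n`
from `M` to `N`: either some reduction from `M` to `N` avoids `e` altogether, or some `e`-steps from
`M` leave a standard reduction to `N` shorter than `n`. -/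
def AvoidsOrShortens (e : PTm → PTm → Prop) (n : ℕ) (M N : PTm) : Prop :=
  ReflTransGen (Avoiding e) M N ∨ ∃ m P, m < n ∧ ReflTransGen e M P ∧ Standard m P N

theorem reflTransGen_avoiding_app {e : PTm → PTm → Prop} (he : WeakBv ≤ e)
    (happ : ∀ {P Q T}, ¬ IsRedex (app P Q) → e (app P Q) T →
      (∃ P', T = app P' Q ∧ e P P') ∨ ∃ Q', T = app P Q' ∧ e Q Q')
    {P P' Q Q' : PTm} (hP : ReflTransGen (Avoiding e) P P')
    (hQ : ReflTransGen (Avoiding e) Q Q') (hr : ¬ IsRedex (app P Q)) :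
    ReflTransGen (Avoiding e) (app P Q) (app P' Q') := by
  have hL := reflTransGen_lift_of_invariant (p := fun x => ¬ IsRedex (app x Q))
    (s := Avoiding e) (app · Q) (fun {x y} hx hxy => by
      refine ⟨mt (hxy.deepBv he).appL.isRedex_iff.2 hx,
        hxy.map (app_left_injective Q) .appL fun h => ?_⟩
      obtain ⟨_, hy, h⟩ | ⟨_, hy, -⟩ := happ hx h
      · exact (app.inj hy).1 ▸ h
      · exact absurd (app.inj hy).1.symm hxy.1.2) hP hr
  have hR := reflTransGen_lift_of_invariant (p := fun x => ¬ IsRedex (app P' x))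
    (s := Avoiding e) (app P') (fun {x y} hx hxy => by
      refine ⟨mt (hxy.deepBv he).appR.isRedex_iff.2 hx,
        hxy.map (app_right_injective P') .appR fun h => ?_⟩
      obtain ⟨_, hy, -⟩ | ⟨_, hy, h⟩ := happ hx h
      · exact absurd (app.inj hy).2.symm hxy.1.2
      · exact (app.inj hy).2 ▸ h) hQ hL.1
  exact hL.2.trans hR.2

namespace AvoidsOrShortens

variable {e : PTm → PTm → Prop} {a b : ℕ} {P P' Q Q' : PTm}

theorem of_weakBvSteps (he : WeakBv ≤ e) (hPQ : WeakBvSteps a P Q) (hI : InternalStandard b Q P')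
    (h : AvoidsOrShortens e b Q P') : AvoidsOrShortens e (a + b) P P' := by
  cases hPQ with
  | zero => rwa [Nat.zero_add]
  | succ h₁ h₂ => exact .inr ⟨_, _, by omega, .single (he _ _ h₁), h₂.standard hI.standard⟩

theorem of_invariant {e' : PTm → PTm → Prop} {p : PTm → Prop} (h : AvoidsOrShortens e a P P')
    (hP : p P) (hp : ∀ {x y}, p x → Avoiding e x y → p y) (he : ∀ {x y}, p x → e' x y → e x y)
    (hsteps : ∀ {x}, ReflTransGen e P x → ReflTransGen e' P x) : AvoidsOrShortens e' a P P' := by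
  refine h.imp (fun h => ?_) fun ⟨m, x, hlt, hx, hS⟩ => ⟨m, x, hlt, hsteps hx, hS⟩
  exact (reflTransGen_lift_of_invariant (p := p) id
    (fun hx hxy => ⟨hp hx hxy, hxy.1, mt (he hx) hxy.2⟩) h hP).2

theorem app (hP : InternalStandard a P P') (hQ : InternalStandard b Q Q')
    (hP' : AvoidsOrShortens e a P P') (hQ' : AvoidsOrShortens e b Q Q')
    (hL : ∀ {x}, ReflTransGen e P x → ReflTransGen e (PTm.app P Q) (PTm.app x Q))
    (hR : ∀ {x}, ReflTransGen e Q x → ReflTransGen e (PTm.app P Q) (PTm.app P x))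
    (havoid : ReflTransGen (Avoiding e) P P' → ReflTransGen (Avoiding e) Q Q' →
      AvoidsOrShortens e (a + b) (PTm.app P Q) (PTm.app P' Q')) :
    AvoidsOrShortens e (a + b) (PTm.app P Q) (PTm.app P' Q') := by
  obtain hP' | ⟨m, x, hlt, hx, hS⟩ := hP'
  · obtain hQ' | ⟨m, x, hlt, hx, hS⟩ := hQ'
    · exact havoid hP' hQ'
    · exact .inr ⟨a + m, _, by omega, hR hx, hP.standard.app hS⟩
  · exact .inr ⟨m + b, _, by omega, hL hx, hS.app hQ.standard⟩

end AvoidsOrShortens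

/-! ### Avoiding weak steps -/

theorem weakBv_app_lam_iff {A V T : PTm} (hV : IsValue V) :
    WeakBv (app (lam A) V) T ↔ T = A.subst 0 V := by
  constructor
  · rintro (_ | h | h)
    · rfl
    · exact absurd h (not_weakBv_of_isValue (.lam A))
    · exact absurd h (not_weakBv_of_isValue hV)
  · rintro rfl
    exact .beta hV

theorem WeakBv.of_app {P Q T : PTm} (hr : ¬ IsRedex (app P Q)) (h : WeakBv (app P Q) T) :
    (∃ P', T = app P' Q ∧ WeakBv P P') ∨ ∃ Q', T = app P Q' ∧ WeakBv Q Q' := by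
  cases h with
  | beta hV => exact absurd ⟨hV⟩ hr
  | appL h => exact .inl ⟨_, rfl, h⟩
  | appR h => exact .inr ⟨_, rfl, h⟩

theorem InternalStandard.reflTransGen_avoiding_weakBv {n : ℕ} {M N : PTm}
    (h : InternalStandard n M N) (hM : ¬ HasWeakRedex M) : ReflTransGen (Avoiding WeakBv) M N := by
  refine (reflTransGen_lift_of_invariant (p := (¬ HasWeakRedex ·)) id (fun {x y} hx hxy => ?_)
    h.reflTransGen_deepBv hM).2
  exact ⟨mt hxy.1.hasWeakRedex_iff.2 hx, ⟨hxy.1.fullBv, hxy.2⟩, fun hw => hx ⟨_, hw⟩⟩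

theorem avoidsOrShortens_weakBv_redex {a b m : ℕ} {A A₁ B V V' : PTm} (hV : IsValue V)
    (hW : WeakBvSteps a A A₁) (hA : InternalStandard b A₁ B) (hVV' : InternalStandard m V V') :
    AvoidsOrShortens WeakBv (a + b + m) (app (lam A) V) (app (lam B) V') := by
  have hbody : SubstAvoidsOrShortens 0 V V (a + b) A B :=
    .of_weakBvSteps hV hW hA (hA.substAvoidsOrShortens (.root hV))
  have harg := reflTransGen_lift_of_invariant (p := IsValue) (s := Avoiding WeakBv) (app (lam B))
    (fun {x y} hx hxy => ⟨hxy.1.isValue_iff.1 hx,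
      avoiding_of_deepBv_map (app_right_injective _) .appR hxy fun hw =>
        subst_zero_ne_app_lam_of_fullBv hxy.1.fullBv hx ((weakBv_app_lam_iff hx).1 hw).symm⟩)
    hVV'.reflTransGen_deepBv hV
  obtain h | ⟨c, d, Y, hY, hYB, hlt⟩ := hbody
  · refine .inl (.trans (ReflTransGen.lift (fun x => app (lam x) V) (fun x y hxy => ?_) _ _ h)
      harg.2)
    exact hxy.map ((app_left_injective V).comp lam_injective) (fun h => h.lam.appL)
      fun hw => ((weakBv_app_lam_iff hV).1 hw).symm
  · exact .inr ⟨d + m, _, by omega, .head (.beta hV) hY.reflTransGen, (hYB.lam.app hVV').standard⟩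

theorem InternalStandard.avoidsOrShortens_weakBv {n : ℕ} {M N : PTm}
    (h : InternalStandard n M N) : AvoidsOrShortens WeakBv n M N := by
  induction h with
  | var n => exact .inl .refl
  | lam hW hI =>
    exact .inl ((lam hW hI).reflTransGen_avoiding_weakBv (not_hasWeakRedex_of_isValue (.lam _)))
  | oplus hWP hP hWQ hQ =>
    exact .inl ((oplus hWP hP hWQ hQ).reflTransGen_avoiding_weakBv not_hasWeakRedex_oplus)
  | @app _ _ P P' Q Q' hP hQ ihP ihQ =>
    refine .app hP hQ ihP ihQ (ReflTransGen.lift (PTm.app · Q) (fun _ _ => .appL) _ _)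
      (ReflTransGen.lift (PTm.app P) (fun _ _ => .appR) _ _) fun hPP' hQQ' => ?_
    by_cases hr : IsRedex (PTm.app P Q)
    · obtain ⟨hV⟩ := hr
      obtain _ | ⟨hW, hA⟩ := hP
      exact avoidsOrShortens_weakBv_redex hV hW hA hQ
    · exact .inl (reflTransGen_avoiding_app le_rfl WeakBv.of_app hPP' hQQ' hr)

/-! ### Avoiding unbiased steps -/

theorem weakBv_le_unbBv : WeakBv ≤ UnbBv := fun _ _ => .weak

namespace UnbBv

variable {M N P P' Q T : PTm}

theorem fullBv (h : UnbBv M N) : FullBv M N := by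
  induction h with
  | weak h => exact h.fullBv
  | lam _ _ ih => exact .lam ih
  | appL _ _ ih => exact .appL ih
  | appR _ _ ih => exact .appR ih
  | oplusL _ _ ih => exact .oplusL ih
  | oplusR _ _ ih => exact .oplusR ih

theorem deepBv (h : UnbBv M N) (hM : ¬ HasWeakRedex M) : DeepBv M N :=
  h.fullBv.deepBv fun hw => hM ⟨_, hw⟩

theorem weakBv (h : UnbBv M N) (hM : HasWeakRedex M) : WeakBv M N := by
  obtain ⟨_, hw⟩ := hM
  cases h with
  | weak h => exact h
  | _ h => exact absurd hw (h _)

theorem lam_iff : UnbBv (PTm.lam P) (PTm.lam P') ↔ UnbBv P P' := by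
  constructor
  · rintro (h | ⟨-, h⟩)
    · exact absurd h (not_weakBv_of_isValue (.lam P))
    · exact h
  · exact .lam fun _ => not_weakBv_of_isValue (.lam P)

theorem of_app (hr : ¬ IsRedex (app P Q)) (h : UnbBv (app P Q) T) :
    (∃ P', T = app P' Q ∧ UnbBv P P') ∨ ∃ Q', T = app P Q' ∧ UnbBv Q Q' := by
  cases h with
  | weak hw =>
    exact (hw.of_app hr).imp (fun ⟨P', hT, h⟩ => ⟨P', hT, .weak h⟩)
      fun ⟨Q', hT, h⟩ => ⟨Q', hT, .weak h⟩
  | appL _ h => exact .inl ⟨_, rfl, h⟩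
  | appR _ h => exact .inr ⟨_, rfl, h⟩

theorem oplus_iff : UnbBv (oplus P Q) T ↔
    (∃ P', T = oplus P' Q ∧ UnbBv P P') ∨ ∃ Q', T = oplus P Q' ∧ UnbBv Q Q' := by
  constructor
  · rintro (h | _ | _ | _ | ⟨-, h⟩ | ⟨-, h⟩)
    · exact absurd h not_weakBv_oplus
    · exact .inl ⟨_, rfl, h⟩
    · exact .inr ⟨_, rfl, h⟩
  · rintro (⟨P', rfl, h⟩ | ⟨Q', rfl, h⟩)
    · exact .oplusL (fun _ => not_weakBv_oplus) h
    · exact .oplusR (fun _ => not_weakBv_oplus) h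

end UnbBv

theorem reflTransGen_avoiding_unbBv_oplus {P P' Q Q' : PTm}
    (hP : ReflTransGen (Avoiding UnbBv) P P') (hQ : ReflTransGen (Avoiding UnbBv) Q Q') :
    ReflTransGen (Avoiding UnbBv) (oplus P Q) (oplus P' Q') := by
  refine .trans (ReflTransGen.lift (oplus · Q) (fun x y hxy => ?_) _ _ hP)
    (ReflTransGen.lift (oplus P') (fun x y hxy => ?_) _ _ hQ)
  · refine hxy.map (oplus_left_injective Q) .oplusL fun h => ?_
    obtain ⟨_, hy, h⟩ | ⟨_, hy, -⟩ := UnbBv.oplus_iff.1 h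
    · exact (oplus.inj hy).1 ▸ h
    · exact absurd (oplus.inj hy).1.symm hxy.1.2
  · refine hxy.map (oplus_right_injective P') .oplusR fun h => ?_
    obtain ⟨_, hy, -⟩ | ⟨_, hy, h⟩ := UnbBv.oplus_iff.1 h
    · exact absurd (oplus.inj hy).2.symm hxy.1.2
    · exact (oplus.inj hy).2 ▸ h

namespace AvoidsOrShortens

variable {n m : ℕ} {P P' Q Q' : PTm}

theorem unbBv_lam (h : AvoidsOrShortens UnbBv n P P') :
    AvoidsOrShortens UnbBv n (lam P) (lam P') := by
  obtain h | ⟨m, x, hlt, hx, hS⟩ := h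
  · exact .inl (ReflTransGen.lift lam (fun _ _ hxy =>
      hxy.map lam_injective .lam UnbBv.lam_iff.1) _ _ h)
  · exact .inr ⟨m, _, hlt, ReflTransGen.lift lam (fun _ _ => UnbBv.lam_iff.2) _ _ hx,
      hS.lam.standard⟩

theorem unbBv_oplus (hP : Standard n P P') (hQ : Standard m Q Q')
    (hP' : AvoidsOrShortens UnbBv n P P') (hQ' : AvoidsOrShortens UnbBv m Q Q') :
    AvoidsOrShortens UnbBv (n + m) (oplus P Q) (oplus P' Q') := by
  obtain hP' | ⟨l, x, hlt, hx, hS⟩ := hP'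
  · obtain hQ' | ⟨l, x, hlt, hx, hS⟩ := hQ'
    · exact .inl (reflTransGen_avoiding_unbBv_oplus hP' hQ')
    · exact .inr ⟨n + l, _, by omega, ReflTransGen.lift (oplus P)
        (fun _ y h => UnbBv.oplus_iff.2 (.inr ⟨y, rfl, h⟩)) _ _ hx, (hP.oplus hS).standard⟩
  · exact .inr ⟨l + m, _, by omega, ReflTransGen.lift (oplus · Q)
      (fun _ y h => UnbBv.oplus_iff.2 (.inl ⟨y, rfl, h⟩)) _ _ hx, (hS.oplus hQ).standard⟩

theorem unbBv_of_hasWeakRedex (h : AvoidsOrShortens WeakBv n P P') (hP : HasWeakRedex P) :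
    AvoidsOrShortens UnbBv n P P' :=
  h.of_invariant hP (fun hx hxy => (hxy.deepBv le_rfl).hasWeakRedex_iff.1 hx)
    (fun hx hu => hu.weakBv hx) (ReflTransGen.mono weakBv_le_unbBv _ _)

theorem unbBv_app_of_not_hasWeakRedex (hP : InternalStandard n P P') (hQ : InternalStandard m Q Q')
    (hP' : AvoidsOrShortens UnbBv n P P') (hQ' : AvoidsOrShortens UnbBv m Q Q')
    (hw : ¬ HasWeakRedex (PTm.app P Q)) :
    AvoidsOrShortens UnbBv (n + m) (PTm.app P Q) (PTm.app P' Q') := by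
  have hr : ¬ IsRedex (PTm.app P Q) := fun h => hw (hasWeakRedex_app.2 (.inl h))
  refine .app hP hQ hP' hQ' (fun h => ?_) (fun h => ?_)
    fun hP hQ => .inl (reflTransGen_avoiding_app weakBv_le_unbBv UnbBv.of_app hP hQ hr)
  · refine (reflTransGen_lift_of_invariant (p := fun x => ¬ HasWeakRedex (PTm.app x Q))
      (PTm.app · Q) (fun {x y} hx hxy => ?_) h hw).2
    have hd := hxy.deepBv fun h => hx (hasWeakRedex_app.2 (.inr (.inl h)))
    exact ⟨mt hd.appL.hasWeakRedex_iff.2 hx, .appL (not_exists.1 hx) hxy⟩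
  · refine (reflTransGen_lift_of_invariant (p := fun x => ¬ HasWeakRedex (PTm.app P x))
      (PTm.app P) (fun {x y} hx hxy => ?_) h hw).2
    have hd := hxy.deepBv fun h => hx (hasWeakRedex_app.2 (.inr (.inr h)))
    exact ⟨mt hd.appR.hasWeakRedex_iff.2 hx, .appR (not_exists.1 hx) hxy⟩

end AvoidsOrShortens

theorem InternalStandard.avoidsOrShortens_unbBv {n : ℕ} {M N : PTm}
    (h : InternalStandard n M N) : AvoidsOrShortens UnbBv n M N := by
  induction h with
  | var n => exact .inl .refl
  | lam hW hI ih => exact .unbBv_lam (.of_weakBvSteps weakBv_le_unbBv hW hI ih)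
  | oplus hWP hP hWQ hQ ihP ihQ =>
    exact .unbBv_oplus ⟨hWP, hP⟩ ⟨hWQ, hQ⟩ (.of_weakBvSteps weakBv_le_unbBv hWP hP ihP)
      (.of_weakBvSteps weakBv_le_unbBv hWQ hQ ihQ)
  | @app _ _ P _ Q _ hP hQ ihP ihQ =>
    by_cases hw : HasWeakRedex (PTm.app P Q)
    · exact (app hP hQ).avoidsOrShortens_weakBv.unbBv_of_hasWeakRedex hw
    · exact .unbBv_app_of_not_hasWeakRedex hP hQ ihP ihQ hw

/-! ### Factorization of terms and of multi-distributions -/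

/-- The steps of `r` that lead to a single term. Among the steps `⊳E` and `⋫E` these are the
βv-steps. -/
def OnTerms (r : PTm → MDist → Prop) (M N : PTm) : Prop := r M (single N)

theorem single_injective : Function.Injective single := fun _ _ h =>
  congrArg Prod.snd (Multiset.singleton_inj.1 h)

theorem pair_ne_single {q q' : NNReal × PTm} {N : PTm} : ({q, q'} : MDist) ≠ single N := by
  intro h
  have hcard := congrArg Multiset.card h
  rw [Multiset.card_pair, single, Multiset.card_singleton] at hcard
  cases hcard

theorem SStep.eStep {M : PTm} {m : MDist} (h : SStep M m) : EStep M m :=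
  .surf (fun hM => hM _ h) h

theorem WeakBv.onTerms_eStep {M N : PTm} (h : WeakBv M N) : OnTerms EStep M N :=
  (SStep.bv h).eStep

theorem weakBv_of_sStep_single {M N : PTm} (h : SStep M (single N)) : WeakBv M N := by
  generalize hm : single N = m at h
  cases h with
  | bv h => exact single_injective hm ▸ h
  | oplus => exact absurd hm.symm pair_ne_single

theorem weakBv_of_onTerms_eStep {M N : PTm} (hM : ¬ SurfNormal M) (h : OnTerms EStep M N) :
    WeakBv M N := by
  unfold OnTerms at h
  generalize hm : single N = m at h
  cases h with
  | surf _ h => exact weakBv_of_sStep_single (hm ▸ h)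
  | unb hn => exact absurd hn hM

theorem unbBv_of_onTerms_eStep {M N : PTm} (hM : SurfNormal M) (h : OnTerms EStep M N) :
    UnbBv M N := by
  unfold OnTerms at h
  generalize hm : single N = m at h
  cases h with
  | surf hn => exact absurd hM hn
  | unb _ h => exact single_injective hm ▸ h

theorem WeakBvSteps.reflTransGen_eStep {n : ℕ} {M N : PTm} (h : WeakBvSteps n M N) :
    ReflTransGen (OnTerms EStep) M N :=
  ReflTransGen.mono (fun _ _ => WeakBv.onTerms_eStep) _ _ h.reflTransGen

theorem InternalStandard.avoidsOrShortens_eStep {n : ℕ} {M N : PTm} (h : InternalStandard n M N) :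
    AvoidsOrShortens (OnTerms EStep) n M N := by
  by_cases hM : SurfNormal M
  · refine h.avoidsOrShortens_unbBv.of_invariant (p := SurfNormal) hM
      (fun hx hxy => (hxy.deepBv weakBv_le_unbBv).surfNormal_iff.1 hx) unbBv_of_onTerms_eStep
      fun h => (reflTransGen_lift_of_invariant (p := SurfNormal) id (fun hx hxy => ?_) h hM).2
    exact ⟨(hxy.deepBv (surfNormal_iff.1 hx).1).surfNormal_iff.1 hx, .unb hx hxy⟩
  · exact h.avoidsOrShortens_weakBv.of_invariant (p := (¬ SurfNormal ·)) hM
      (fun hx hxy => mt (hxy.deepBv le_rfl).surfNormal_iff.2 hx) weakBv_of_onTerms_eStep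
      (ReflTransGen.mono (fun _ _ => WeakBv.onTerms_eStep) _ _)

theorem Standard.exists_eStep_iStep {n : ℕ} {M N : PTm} (h : Standard n M N) :
    ∃ P, ReflTransGen (OnTerms EStep) M P ∧ ReflTransGen (OnTerms IStep) P N := by
  induction n using Nat.strong_induction_on generalizing M N with
  | _ n ih =>
    obtain @⟨a, b, _, Q, _, hW, hI⟩ := h
    obtain hQ | ⟨m, R, hlt, hQR, hR⟩ := hI.avoidsOrShortens_eStep
    · exact ⟨Q, hW.reflTransGen_eStep,
        ReflTransGen.mono (fun _ _ hxy => ⟨.bv hxy.1.1, hxy.2⟩) _ _ hQ⟩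
    · obtain ⟨P, hRP, hPN⟩ := ih m (by omega) hR
      exact ⟨P, (hW.reflTransGen_eStep.trans hQR).trans hRP, hPN⟩

theorem InternalStandard.exists_oplusRed {n : ℕ} {M N N₁ N₂ : PTm} (h : InternalStandard n M N)
    (hN : OplusRed N N₁ N₂) :
    ∃ M₁ M₂, OplusRed M M₁ M₂ ∧ (∃ m, Standard m M₁ N₁) ∧ ∃ m, Standard m M₂ N₂ := by
  induction hN generalizing n M with
  | root =>
    obtain _ | _ | _ | ⟨hWP, hP, hWQ, hQ⟩ := h
    exact ⟨_, _, .root _ _, ⟨_, hWP, hP⟩, ⟨_, hWQ, hQ⟩⟩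
  | appL _ ih =>
    obtain _ | _ | ⟨hP, hQ⟩ := h
    obtain ⟨_, _, ho, ⟨_, h₁⟩, ⟨_, h₂⟩⟩ := ih hP
    exact ⟨_, _, .appL ho, ⟨_, h₁.app hQ.standard⟩, ⟨_, h₂.app hQ.standard⟩⟩
  | appR _ ih =>
    obtain _ | _ | ⟨hP, hQ⟩ := h
    obtain ⟨_, _, ho, ⟨_, h₁⟩, ⟨_, h₂⟩⟩ := ih hQ
    exact ⟨_, _, .appR ho, ⟨_, hP.standard.app h₁⟩, ⟨_, hP.standard.app h₂⟩⟩

theorem scale_single (p : NNReal) (M : PTm) : scale p (single M) = {(p, M)} := by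
  simp only [scale, single, Multiset.map_singleton, mul_one]

theorem scale_pair (p : NNReal) (q q' : NNReal × PTm) :
    scale p {q, q'} = {(p * q.1, q.2)} + {(p * q'.1, q'.2)} := by
  simp only [scale, Multiset.insert_eq_cons, Multiset.map_cons, Multiset.map_singleton,
    Multiset.singleton_add]

section Lift

variable {r : PTm → MDist → Prop} {m n m' n' : MDist}

theorem Lift.refl (m : MDist) : Lift r m m := by
  induction m using Multiset.induction_on with
  | empty => exact .zero
  | cons q m ih => exact .keep ih

theorem Lift.add (h : Lift r m n) (h' : Lift r m' n') : Lift r (m + m') (n + n') := by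
  induction h with
  | zero => rwa [zero_add, zero_add]
  | keep _ ih => rw [Multiset.cons_add, Multiset.cons_add]; exact .keep ih
  | step hr _ ih => rw [Multiset.cons_add, add_assoc]; exact .step hr ih

theorem Lift.singleton {M : PTm} {d : MDist} (p : NNReal) (h : r M d) :
    Lift r {(p, M)} (scale p d) := by
  rw [← add_zero (scale p d)]
  exact .step h .zero

theorem reflTransGen_lift_add (h : ReflTransGen (Lift r) m n) (h' : ReflTransGen (Lift r) m' n') :
    ReflTransGen (Lift r) (m + m') (n + n') :=
  (ReflTransGen.lift (· + m') (fun _ _ h => h.add (.refl m')) _ _ h).trans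
    (ReflTransGen.lift (n + ·) (fun _ _ h => (Lift.refl n).add h) _ _ h')

theorem reflTransGen_lift_singleton (p : NNReal) {M N : PTm}
    (h : ReflTransGen (OnTerms r) M N) : ReflTransGen (Lift r) {(p, M)} {(p, N)} :=
  ReflTransGen.lift (fun x => ({(p, x)} : MDist)) (fun x y hxy => by
    change Lift r {(p, x)} {(p, y)}
    rw [← scale_single p y]
    exact .singleton p hxy) _ _ h

end Lift

/-- Internal standard reductions between weighted terms, of any length and with equal weights. -/
def WeightedInternalStandard (q q' : NNReal × PTm) : Prop :=
  q.1 = q'.1 ∧ ∃ n, InternalStandard n q.2 q'.2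

/-- Standard reduction of multi-distributions: evaluation steps `⇛E` followed by an internal
standard reduction in each component. -/
def StandardMDist (m n : MDist) : Prop :=
  ∃ d, ReflTransGen (Lift EStep) m d ∧ Multiset.Rel WeightedInternalStandard d n

theorem StandardMDist.refl (m : MDist) : StandardMDist m m :=
  ⟨m, .refl, Multiset.rel_refl_of_refl_on fun _ _ => ⟨rfl, 0, .refl _⟩⟩

theorem StandardMDist.add {m n m' n' : MDist} (h : StandardMDist m n) (h' : StandardMDist m' n') :
    StandardMDist (m + m') (n + n') := by
  obtain ⟨d, hE, hI⟩ := h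
  obtain ⟨d', hE', hI'⟩ := h'
  exact ⟨d + d', reflTransGen_lift_add hE hE', hI.add hI'⟩

theorem StandardMDist.head {m m' n : MDist} (h : ReflTransGen (Lift EStep) m m')
    (h' : StandardMDist m' n) : StandardMDist m n := by
  obtain ⟨d, hE, hI⟩ := h'
  exact ⟨d, h.trans hE, hI⟩

theorem Standard.standardMDist {n : ℕ} {M N : PTm} (h : Standard n M N) (p : NNReal) :
    StandardMDist {(p, M)} {(p, N)} := by
  obtain ⟨hW, hI⟩ := h
  exact ⟨_, reflTransGen_lift_singleton p hW.reflTransGen_eStep, .cons ⟨rfl, _, hI⟩ .zero⟩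

theorem InternalStandard.standardMDist_of_step {n : ℕ} {M N : PTm} {d : MDist}
    (h : InternalStandard n M N) (hN : Step N d) (p : NNReal) :
    StandardMDist {(p, M)} (scale p d) := by
  cases hN with
  | bv hN =>
    obtain ⟨_, hS⟩ := h.exists_standard_of_fullBv hN
    rw [scale_single]
    exact hS.standardMDist p
  | oplus hN =>
    obtain ⟨M₁, M₂, ho, ⟨_, h₁⟩, ⟨_, h₂⟩⟩ := h.exists_oplusRed hN
    refine .head (.single (.singleton p (SStep.oplus ho).eStep)) ?_
    rw [scale_pair, scale_pair]
    exact (h₁.standardMDist _).add (h₂.standardMDist _)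

theorem standardMDist_of_rel_of_lift_step {d n n' : MDist}
    (hd : Multiset.Rel WeightedInternalStandard d n) (h : Lift Step n n') :
    StandardMDist d n' := by
  induction h generalizing d with
  | zero => exact ⟨d, .refl, hd⟩
  | keep _ ih =>
    obtain ⟨q, d, hq, hdm, rfl⟩ := Multiset.rel_cons_right.1 hd
    rw [← Multiset.singleton_add, ← Multiset.singleton_add]
    exact .add ⟨_, .refl, .cons hq .zero⟩ (ih hdm)
  | step hN _ ih =>
    obtain ⟨⟨_, M⟩, d, ⟨rfl, _, hI⟩, hdm, rfl⟩ := Multiset.rel_cons_right.1 hd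
    rw [← Multiset.singleton_add]
    exact (hI.standardMDist_of_step hN _).add (ih hdm)

theorem standardMDist_of_reflTransGen {m n : MDist} (h : ReflTransGen (Lift Step) m n) :
    StandardMDist m n := by
  induction h with
  | refl => exact .refl m
  | tail _ h ih =>
    obtain ⟨d, hE, hI⟩ := ih
    exact .head hE (standardMDist_of_rel_of_lift_step hI h)

theorem exists_eStep_iStep_of_rel {d n : MDist} (h : Multiset.Rel WeightedInternalStandard d n) :
    ∃ d', ReflTransGen (Lift EStep) d d' ∧ ReflTransGen (Lift IStep) d' n := by
  induction h with
  | zero => exact ⟨0, .refl, .refl⟩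
  | @cons q q' _ _ hq _ ih =>
    obtain ⟨p, M⟩ := q
    obtain ⟨_, N⟩ := q'
    obtain ⟨rfl, _, hI⟩ := hq
    obtain ⟨d', hE, hI'⟩ := ih
    obtain ⟨P, hMP, hPN⟩ := hI.standard.exists_eStep_iStep
    rw [← Multiset.singleton_add, ← Multiset.singleton_add]
    exact ⟨{(p, P)} + d', reflTransGen_lift_add (reflTransGen_lift_singleton p hMP) hE,
      reflTransGen_lift_add (reflTransGen_lift_singleton p hPN) hI'⟩

theorem StandardMDist.exists_eStep_iStep {m n : MDist} (h : StandardMDist m n) :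
    ∃ d, ReflTransGen (Lift EStep) m d ∧ ReflTransGen (Lift IStep) d n := by
  obtain ⟨d, hE, hI⟩ := h
  obtain ⟨d', hE', hI'⟩ := exists_eStep_iStep_of_rel hI
  exact ⟨d', hE.trans hE', hI'⟩

/-! ### Neutrality -/

theorem FullBv.exists_fullBv_of_hasWeakRedex {M N : PTm} (h : FullBv M N) (hu : ¬ UnbBv M N)
    (hM : HasWeakRedex M) : ∃ N', FullBv N N' := by
  obtain ⟨N', hN'⟩ := (h.deepBv fun hw => hu (.weak hw)).hasWeakRedex_iff.1 hM
  exact ⟨N', hN'.fullBv⟩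

theorem FullBv.exists_fullBv_of_not_unbBv {M N : PTm} (h : FullBv M N) (hu : ¬ UnbBv M N) :
    ∃ N', FullBv N N' := by
  induction h with
  | beta hV => exact absurd (.weak (.beta hV)) hu
  | lam _ ih =>
    obtain ⟨_, hR⟩ := ih (mt UnbBv.lam_iff.2 hu)
    exact ⟨_, .lam hR⟩
  | @appL P _ Q h ih =>
    by_cases hw : HasWeakRedex (PTm.app P Q)
    · exact (FullBv.appL h).exists_fullBv_of_hasWeakRedex hu hw
    · obtain ⟨_, hR⟩ := ih (mt (.appL (not_exists.1 hw)) hu)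
      exact ⟨_, .appL hR⟩
  | @appR P Q _ h ih =>
    by_cases hw : HasWeakRedex (PTm.app P Q)
    · exact (FullBv.appR h).exists_fullBv_of_hasWeakRedex hu hw
    · obtain ⟨_, hR⟩ := ih (mt (.appR (not_exists.1 hw)) hu)
      exact ⟨_, .appR hR⟩
  | oplusL _ ih =>
    obtain ⟨_, hR⟩ := ih (mt (.oplusL fun _ => not_weakBv_oplus) hu)
    exact ⟨_, .oplusL hR⟩
  | oplusR _ ih =>
    obtain ⟨_, hR⟩ := ih (mt (.oplusR fun _ => not_weakBv_oplus) hu)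
    exact ⟨_, .oplusR hR⟩

theorem SStep.step {M : PTm} {m : MDist} (h : SStep M m) : Step M m := by
  cases h with
  | bv h => exact .bv h.fullBv
  | oplus h => exact .oplus h

theorem IStep.exists_single_not_tmNormal {M : PTm} {d : MDist} (h : IStep M d) :
    ∃ N, d = single N ∧ ¬ TmNormal N := by
  obtain ⟨_ | h, hE⟩ := h
  case oplus => exact absurd (SStep.oplus h).eStep hE
  case bv N h =>
    refine ⟨N, rfl, fun hN => ?_⟩
    by_cases hM : SurfNormal M
    · obtain ⟨_, hR⟩ := h.exists_fullBv_of_not_unbBv fun hu => hE (.unb hM hu)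
      exact hN _ (.bv hR)
    · have hd := h.deepBv fun hw => hE hw.onTerms_eStep
      exact hM (hd.surfNormal_iff.2 fun m hm => hN m hm.step)

theorem obsN_add (m n : MDist) : obsN (m + n) = obsN m + obsN n := by
  funext N
  by_cases hN : TmNormal N
  · simp only [obsN, if_pos hN, Pi.add_apply, Multiset.filter_add, Multiset.map_add,
      Multiset.sum_add]
  · simp only [obsN, if_neg hN, Pi.add_apply, add_zero]

theorem obsN_singleton_of_not_tmNormal {M : PTm} (hM : ¬ TmNormal M) (p : NNReal) :
    obsN {(p, M)} = 0 := by
  funext N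
  by_cases hN : TmNormal N
  · have hMN : M ≠ N := fun h => hM (h ▸ hN)
    simp only [obsN, if_pos hN, Multiset.filter_singleton, if_neg hMN, Multiset.empty_eq_zero,
      Multiset.map_zero, Multiset.sum_zero, Pi.zero_apply]
  · exact if_neg hN

theorem obsN_eq_of_lift_iStep {m n : MDist} (h : Lift IStep m n) : obsN m = obsN n := by
  induction h with
  | zero => rfl
  | keep _ ih =>
    rw [← Multiset.singleton_add, ← Multiset.singleton_add, obsN_add, obsN_add, ih]
  | step hM _ ih =>
    obtain ⟨N, rfl, hN⟩ := hM.exists_single_not_tmNormal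
    rw [← Multiset.singleton_add, scale_single, obsN_add, obsN_add, ih,
      obsN_singleton_of_not_tmNormal (fun h => h _ hM.1), obsN_singleton_of_not_tmNormal hN]

/-- **Factorization and neutrality in the probabilistic Call-by-Value λ-calculus**:
(1) if `m ⇒* n` then there exists `d` with `m ⇛E* d` and `d ⇛¬E* n`;
(2) if `m ⇛¬E n` then `obsN(m) = obsN(n)`. -/
theorem prob_cbv_factorization_and_neutrality :
    (∀ m n : MDist, IsMDist m → IsMDist n →
      Relation.ReflTransGen (Lift Step) m n →
      ∃ d : MDist, Relation.ReflTransGen (Lift EStep) m d ∧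
        Relation.ReflTransGen (Lift IStep) d n) ∧
    (∀ m n : MDist, IsMDist m → Lift IStep m n → obsN m = obsN n) :=
  ⟨fun _ _ _ _ h => (standardMDist_of_reflTransGen h).exists_eStep_iStep,
    fun _ _ _ h => obsN_eq_of_lift_iStep h⟩
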